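/- Suppose t ≥ 4 is an odd integer. Then for every real number x > 0, 1/(1 + x²) ≤ m⁺(P_{t−4}, x) / m⁺(P_{t−3}, x) < 2/(1 + √(1 + 4x²)). -/

import Mathlib

/-!
A matching of the path `P_n` is the same thing as a set of indices `i` with `i + 1 < n`
containing no two consecutive numbers (`i` stands for the edge `{i, i + 1}`). Splitting on whether
the last edge is used gives `m(P_{n+2}, k+1) = m(P_{n+1}, k+1) + m(P_n, k)`, hence
`a_{n+2} = a_{n+1} + x² a_n` for `a_n = m⁺(P_n, x)`, with `a_0 = a_1 = 1`.

The lower bound says `a_{n+1} = a_n + x² a_{n-1} ≤ (1 + x²) a_n`, which is monotonicity of `a`.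
For the upper bound let `l = (1 + √(1 + 4x²)) / 2`, the positive root of `l² = l + x²`; the other
root is `1 - l < 0`. The recurrence gives `a_{n+1} - l a_n = (1 - l)^(n+1)`, which is positive
for odd `n`.
-/

open Finset

/-- A finite set of edges forms a matching in `G`: every member is an edge of `G` and
the edges are pairwise vertex-disjoint. -/
def IsMatchingSet {V : Type*} (G : SimpleGraph V) (s : Finset (Sym2 V)) : Prop :=
  ↑s ⊆ G.edgeSet ∧ (s : Set (Sym2 V)).Pairwise fun e f => ∀ v, v ∈ e → v ∉ f

/-- `matchNum G k` is the number `m(G,k)` of `k`-matchings of `G`. -/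
noncomputable def matchNum {V : Type*} [Fintype V] (G : SimpleGraph V) (k : ℕ) : ℕ :=
  Nat.card {s : Finset (Sym2 V) // IsMatchingSet G s ∧ s.card = k}

/-- `m⁺(G,x) = ∑_{k=0}^{⌊n/2⌋} m(G,k) x^(2k)`, where `n` is the number of vertices. -/
noncomputable def mPlus {V : Type*} [Fintype V] (G : SimpleGraph V) (x : ℝ) : ℝ :=
  ∑ k ∈ Finset.range (Fintype.card V / 2 + 1), (matchNum G k : ℝ) * x ^ (2 * k)

/-- `m⁺(P_t, x)` for an integer `t`, with the convention `m⁺(P_{-1},x) = 0`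
(here `P_t` is the path graph on `t` vertices, `P_0` being the empty graph). -/
noncomputable def mPlusPath (t : ℤ) (x : ℝ) : ℝ :=
  if 0 ≤ t then mPlus (SimpleGraph.pathGraph t.toNat) x else 0

/-- The `k`-element sets of indices `i` with `i + 1 < n` that contain no two consecutive numbers;
the index `i` encodes the edge `{i, i + 1}` of the path on `n` vertices. -/
def sparseSets (n k : ℕ) : Finset (Finset ℕ) :=
  ((range (n - 1)).powersetCard k).filter fun S => ∀ i ∈ S, i + 1 ∉ S

lemma mem_sparseSets {n k : ℕ} {S : Finset ℕ} :
    S ∈ sparseSets n k ↔ (∀ i ∈ S, i + 1 < n) ∧ S.card = k ∧ ∀ i ∈ S, i + 1 ∉ S := by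
  have h : S ⊆ range (n - 1) ↔ ∀ i ∈ S, i + 1 < n :=
    forall₂_congr fun i _ => by rw [mem_range]; omega
  simp only [sparseSets, mem_filter, mem_powersetCard, h, and_assoc]

lemma sparseSets_zero (n : ℕ) : (sparseSets n 0).card = 1 := by
  have : sparseSets n 0 = {∅} := by
    ext S
    rw [mem_sparseSets, mem_singleton, Finset.card_eq_zero]
    constructor
    · exact fun h => h.2.1
    · rintro rfl
      simp
  rw [this, card_singleton]

/-- Split according to whether the index `n` of the last edge belongs to the set. -/
lemma sparseSets_succ (n k : ℕ) : (sparseSets (n + 2) (k + 1)).card =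
    (sparseSets (n + 1) (k + 1)).card + (sparseSets n k).card := by
  have hn : ∀ S ∈ sparseSets n k, n ∉ S := fun S hS h => by
    have := (mem_sparseSets.1 hS).1 n h
    omega
  have key : sparseSets (n + 2) (k + 1) =
      sparseSets (n + 1) (k + 1) ∪ (sparseSets n k).image (insert n) := by
    ext S
    simp only [mem_union, mem_image]
    constructor
    · intro hS
      obtain ⟨h1, h2, h3⟩ := mem_sparseSets.1 hS
      by_cases h : n ∈ S
      · refine Or.inr ⟨S.erase n, mem_sparseSets.2 ⟨?_, ?_, ?_⟩, insert_erase h⟩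
        · intro i hi
          have hi' := mem_erase.1 hi
          have := h1 i hi'.2
          have h4 : i + 1 ≠ n := fun e => h3 i hi'.2 (e ▸ h)
          have := hi'.1
          omega
        · rw [card_erase_of_mem h, h2]; rfl
        · exact fun i hi hi' => h3 i (mem_of_mem_erase hi) (mem_of_mem_erase hi')
      · refine Or.inl (mem_sparseSets.2 ⟨?_, h2, h3⟩)
        intro i hi
        have := h1 i hi
        have : i ≠ n := fun e => h (e ▸ hi)
        omega
    · rintro (hS | ⟨S, hS, rfl⟩)
      · obtain ⟨h1, h2, h3⟩ := mem_sparseSets.1 hS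
        exact mem_sparseSets.2 ⟨fun i hi => (h1 i hi).trans (by omega), h2, h3⟩
      · obtain ⟨h1, h2, h3⟩ := mem_sparseSets.1 hS
        refine mem_sparseSets.2 ⟨?_, by rw [card_insert_of_notMem (hn S hS), h2], ?_⟩
        · intro i hi
          rcases mem_insert.1 hi with rfl | hi
          · omega
          · have := h1 i hi
            omega
        · intro i hi hi'
          rcases mem_insert.1 hi with rfl | hi <;> rcases mem_insert.1 hi' with e | hi'
          · omega
          · have := h1 _ hi'
            omega
          · have := h1 _ hi
            omega
          · exact h3 i hi hi'
  rw [key, card_union_of_disjoint, card_image_of_injOn]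
  · intro S hS T hT h
    have := congrArg (fun U => U.erase n) h
    simpa [erase_insert (hn S hS), erase_insert (hn T hT)] using this
  · rw [disjoint_left]
    intro S hS hS'
    obtain ⟨T, _, rfl⟩ := mem_image.1 hS'
    have := (mem_sparseSets.1 hS).1 n (mem_insert_self _ _)
    omega

lemma sparseSets_eq_zero : ∀ n k : ℕ, n < 2 * k → (sparseSets n k).card = 0
  | _, 0, h => by omega
  | n + 2, k + 1, h => by
    rw [sparseSets_succ, sparseSets_eq_zero (n + 1) (k + 1) (by omega),
      sparseSets_eq_zero n k (by omega)]
  | 0, k + 1, _ => by simp [sparseSets]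
  | 1, k + 1, _ => by simp [sparseSets]

/-- The smaller endpoint of an edge, which determines the edge in a path graph. -/
def lowEnd {n : ℕ} (e : Sym2 (Fin n)) : ℕ := (e.map Fin.val).inf

lemma lowEnd_edge {n i : ℕ} (h : i + 1 < n) :
    lowEnd s((⟨i, by omega⟩ : Fin n), ⟨i + 1, h⟩) = i := by
  simp [lowEnd]

lemma edge_eq {n : ℕ} {e : Sym2 (Fin n)} (he : e ∈ (SimpleGraph.pathGraph n).edgeSet) :
    ∃ (i : ℕ) (h : i + 1 < n), e = s((⟨i, by omega⟩ : Fin n), ⟨i + 1, h⟩) := by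
  induction e with
  | _ u v =>
    rw [SimpleGraph.mem_edgeSet, SimpleGraph.pathGraph_adj] at he
    rcases he with h | h
    · exact ⟨u, by omega, by congr 2; exact Fin.ext h.symm⟩
    · refine ⟨v, by omega, ?_⟩
      rw [Sym2.eq_swap]
      congr 2
      exact Fin.ext h.symm

lemma lowEnd_injOn (n : ℕ) : Set.InjOn lowEnd (SimpleGraph.pathGraph n).edgeSet := by
  intro e he f hf h
  obtain ⟨i, hi, rfl⟩ := edge_eq he
  obtain ⟨j, hj, rfl⟩ := edge_eq hf
  rw [lowEnd_edge, lowEnd_edge] at h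
  subst h
  rfl

/-- Taking lower endpoints is a bijection from `k`-matchings of the path to `sparseSets n k`. -/
lemma matchNum_path (n k : ℕ) :
    matchNum (SimpleGraph.pathGraph n) k = (sparseSets n k).card := by
  classical
  have hcard : Nat.card (sparseSets n k : Set (Finset ℕ)) = (sparseSets n k).card := by simp
  rw [matchNum, ← hcard]
  have hmem : ∀ T : Finset (Sym2 (Fin n)), IsMatchingSet (SimpleGraph.pathGraph n) T ∧ T.card = k →
      T.image lowEnd ∈ (sparseSets n k : Set (Finset ℕ)) := by
    rintro T ⟨⟨h1, h2⟩, h3⟩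
    refine mem_sparseSets.2 ⟨?_, ?_, ?_⟩
    · intro i hi
      obtain ⟨e, he, rfl⟩ := mem_image.1 hi
      obtain ⟨i, hi, rfl⟩ := edge_eq (h1 he)
      rwa [lowEnd_edge]
    · rw [card_image_of_injOn ((lowEnd_injOn n).mono h1), h3]
    · intro i hi hi'
      obtain ⟨e, he, rfl⟩ := mem_image.1 hi
      obtain ⟨f, hf, hfe⟩ := mem_image.1 hi'
      obtain ⟨i, hin, rfl⟩ := edge_eq (h1 he)
      obtain ⟨j, hj, rfl⟩ := edge_eq (h1 hf)
      rw [lowEnd_edge, lowEnd_edge] at hfe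
      subst hfe
      refine h2 he hf ?_ ⟨i + 1, hin⟩ (by simp) (by simp)
      simp
      omega
  refine Nat.card_eq_of_bijective (fun T => ⟨T.1.image lowEnd, hmem T.1 T.2⟩) ⟨?_, ?_⟩
  · rintro ⟨S, hS⟩ ⟨T, hT⟩ h
    have h' : S.image lowEnd = T.image lowEnd := congrArg Subtype.val h
    apply Subtype.ext
    have h'' := congrArg (fun U : Finset ℕ => (U : Set ℕ)) h'
    simp only [coe_image] at h''
    exact coe_injective (((lowEnd_injOn n).image_eq_image_iff hS.1.1 hT.1.1).1 h'')
  · rintro ⟨S, hS⟩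
    obtain ⟨h1, h2, h3⟩ := mem_sparseSets.1 (mem_coe.1 hS)
    let T : Finset (Sym2 (Fin n)) :=
      univ.filter fun e => e ∈ (SimpleGraph.pathGraph n).edgeSet ∧ lowEnd e ∈ S
    have hT : ∀ e ∈ T, e ∈ (SimpleGraph.pathGraph n).edgeSet := fun e he =>
      (mem_filter.1 he).2.1
    have himg : T.image lowEnd = S := by
      ext i
      rw [mem_image]
      constructor
      · rintro ⟨e, he, rfl⟩
        exact (mem_filter.1 he).2.2
      · intro hi
        refine ⟨s(⟨i, by have := h1 i hi; omega⟩, ⟨i + 1, h1 i hi⟩), ?_, lowEnd_edge _⟩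
        simp [T, SimpleGraph.pathGraph_adj, lowEnd_edge, hi]
    refine ⟨⟨T, ⟨hT, ?_⟩, ?_⟩, Subtype.ext himg⟩
    · intro e he f hf hef v hve hvf
      have heS := (mem_filter.1 he).2.2
      have hfS := (mem_filter.1 hf).2.2
      obtain ⟨i, hi, rfl⟩ := edge_eq (hT e he)
      obtain ⟨j, hj, rfl⟩ := edge_eq (hT f hf)
      rw [lowEnd_edge] at heS hfS
      have hij : i ≠ j := by
        rintro rfl
        exact hef rfl
      have hij1 : j ≠ i + 1 := by
        rintro rfl
        exact h3 i heS hfS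
      have hij2 : i ≠ j + 1 := by
        rintro rfl
        exact h3 j hfS heS
      simp only [Sym2.mem_iff, Fin.ext_iff] at hve hvf
      omega
    · rw [← card_image_of_injOn ((lowEnd_injOn n).mono hT), himg, h2]

/-- The sum defining `m⁺(P_n, x)` may be extended, since the additional terms vanish. -/
lemma mPlus_path (n N : ℕ) (hN : n / 2 + 1 ≤ N) (x : ℝ) : mPlus (SimpleGraph.pathGraph n) x =
    ∑ k ∈ range N, ((sparseSets n k).card : ℝ) * x ^ (2 * k) := by
  simp only [mPlus, matchNum_path, Fintype.card_fin]
  refine sum_subset (range_subset_range.2 hN) fun k _ hk => ?_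
  rw [mem_range] at hk
  rw [sparseSets_eq_zero n k (by omega)]
  simp

lemma mPlus_path_zero (x : ℝ) : mPlus (SimpleGraph.pathGraph 0) x = 1 := by
  rw [mPlus_path 0 1 (by omega)]
  simp [sparseSets_zero]

lemma mPlus_path_one (x : ℝ) : mPlus (SimpleGraph.pathGraph 1) x = 1 := by
  rw [mPlus_path 1 1 (by omega)]
  simp [sparseSets_zero]

lemma mPlus_path_succ (n : ℕ) (x : ℝ) : mPlus (SimpleGraph.pathGraph (n + 2)) x =
    mPlus (SimpleGraph.pathGraph (n + 1)) x + x ^ 2 * mPlus (SimpleGraph.pathGraph n) x := by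
  rw [mPlus_path (n + 2) (n + 2 + 1) (by omega), mPlus_path (n + 1) (n + 2 + 1) (by omega),
    mPlus_path n (n + 2) (by omega), sum_range_succ', sum_range_succ' _ (n + 2), mul_sum,
    sparseSets_zero, sparseSets_zero, add_right_comm, ← sum_add_distrib]
  congr 1
  refine sum_congr rfl fun k _ => ?_
  rw [sparseSets_succ]
  push_cast
  ring

/-- The recurrence `a (n + 2) = a (n + 1) + y a n` has characteristic roots `l` and `1 - l`. -/
lemma sub_root_mul {a : ℕ → ℝ} {y l : ℝ} (h0 : a 0 = 1) (h1 : a 1 = 1)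
    (h : ∀ n, a (n + 2) = a (n + 1) + y * a n) (hl : y = l * (l - 1)) (n : ℕ) :
    a (n + 1) - l * a n = (1 - l) ^ (n + 1) := by
  induction n with
  | zero => simp [h0, h1]
  | succ n ih =>
    rw [h, pow_succ, ← ih, hl]
    ring

theorem stmt8 (t : ℤ) (ht : 4 ≤ t) (hto : Odd t) (x : ℝ) (hx : 0 < x) :
    1 / (1 + x ^ 2) ≤ mPlusPath (t - 4) x / mPlusPath (t - 3) x ∧
    mPlusPath (t - 4) x / mPlusPath (t - 3) x < 2 / (1 + Real.sqrt (1 + 4 * x ^ 2)) := by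
  obtain ⟨m, hm⟩ : ∃ m : ℕ, t - 4 = ((2 * m + 1 : ℕ) : ℤ) := by
    obtain ⟨r, hr⟩ := hto
    exact ⟨(r - 2).toNat, by omega⟩
  have hm' : t - 3 = ((2 * m + 2 : ℕ) : ℤ) := by omega
  rw [hm, hm']
  simp only [mPlusPath, Int.natCast_nonneg, if_true, Int.toNat_natCast]
  set a : ℕ → ℝ := fun n => mPlus (SimpleGraph.pathGraph n) x with ha
  have h0 : a 0 = 1 := mPlus_path_zero x
  have h1 : a 1 = 1 := mPlus_path_one x
  have hrec : ∀ n, a (n + 2) = a (n + 1) + x ^ 2 * a n := fun n => mPlus_path_succ n x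
  change 1 / (1 + x ^ 2) ≤ a (2 * m + 1) / a (2 * m + 2) ∧
    a (2 * m + 1) / a (2 * m + 2) < 2 / (1 + Real.sqrt (1 + 4 * x ^ 2))
  have hx2 : 0 < x ^ 2 := by positivity
  have hpos : ∀ n, 0 < a n ∧ a n ≤ a (n + 1) := by
    intro n
    induction n with
    | zero => simp [h0, h1]
    | succ n ih =>
      refine ⟨ih.1.trans_le ih.2, ?_⟩
      rw [hrec]
      have := mul_pos hx2 ih.1
      linarith
  have hp1 := (hpos (2 * m + 1)).1
  have hp2 : 0 < a (2 * m + 2) := (hpos (2 * m + 2)).1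
  constructor
  · rw [div_le_div_iff₀ (by positivity) hp2, hrec]
    have := mul_le_mul_of_nonneg_left (hpos (2 * m)).2 hx2.le
    linarith
  · have hs := Real.sq_sqrt (show 0 ≤ 1 + 4 * x ^ 2 by positivity)
    have hs1 : 1 < Real.sqrt (1 + 4 * x ^ 2) := Real.lt_sqrt_of_sq_lt (by linarith)
    set s := Real.sqrt (1 + 4 * x ^ 2)
    have key := sub_root_mul h0 h1 hrec (l := (1 + s) / 2) (by linarith) (2 * m + 1)
    have hev : 0 < (1 - (1 + s) / 2) ^ (2 * m + 1 + 1) :=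
      Even.pow_pos ⟨m + 1, by ring⟩ (by linarith)
    rw [div_lt_div_iff₀ hp2 (by linarith)]
    rw [← key] at hev
    change 0 < a (2 * m + 2) - _ at hev
    linarith
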